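/- Performance degradation bound: let the source state space S_S be a metric space and π_S : S_S → PMF A be a source policy that is L_TV-Lipschitz with respect to total variation, i.e., D_TV(π_S(s₁), π_S(s₂)) ≤ L_TV · dist(s₁, s₂) for all s₁, s₂ ∈ S_S. Let h, Ψ : S_T → S_S be state mappings with dist(Ψ(s), h(s)) ≤ ε for all s ∈ S_T, and define the induced target policies π_{S∘h}(s) := π_S(h(s)) and π_Ψ(s) := π_S(Ψ(s)). Let V₁ be the unique bounded fixed point of the target Bellman operator 𝒯^{π_Ψ} and V₂ the unique bounded fixed point of 𝒯^{π_{S∘h}}, and suppose the action-values of V₂ are bounded: |R_T(s,a) + γ · ∑'_{s'} T_T(s,a)(s') · V₂(s')| ≤ Q_max for all s ∈ S_T, a ∈ A. Then ‖V₁ − V₂‖_∞ ≤ (2 · L_TV · Q_max / (1 − γ)) · ε. -/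

import Mathlib

/-!
Both value functions satisfy their own Bellman equation, so `V₁ s - V₂ s` splits as
`E_{π_Ψ}[Q₁ - Q₂] + (E_{π_Ψ} - E_{π_{S∘h}})[Q₂]`, where `Qᵢ` are the action-values of `Vᵢ`.
The first term is at most `γ ‖V₁ - V₂‖_∞` because averaging against a PMF is a contraction
(`abs_tsum_pmf_le`), and the second is at most `2 D_TV · Qmax ≤ 2 L_TV ε Qmax`
(`abs_tsum_pmf_sub_le`). Taking the supremum over `s` and solving for `‖V₁ - V₂‖_∞`, which is
finite by boundedness, gives the bound.
-/

/-- The Bellman evaluation operator for a discounted MDP. -/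
noncomputable def bellman {S A : Type*} (T : S → A → PMF S) (R : S → A → ℝ) (γ : ℝ)
    (π : S → PMF A) (V : S → ℝ) : S → ℝ :=
  fun s => ∑' a : A, (π s a).toReal * (R s a + γ * ∑' s' : S, (T s a s').toReal * V s')

/-- A real-valued function is bounded. -/
def IsBoundedFun {S : Type*} (f : S → ℝ) : Prop := ∃ M : ℝ, ∀ s, |f s| ≤ M

/-- The supremum norm over states. -/
noncomputable def supNorm {S : Type*} (f : S → ℝ) : ℝ := ⨆ s : S, |f s|

/-- Total variation distance between two PMFs on a countable type. -/
noncomputable def tvDist {A : Type*} (p q : PMF A) : ℝ :=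
  (1 / 2) * ∑' a : A, |(p a).toReal - (q a).toReal|

lemma summable_pmf_toReal {A : Type*} (p : PMF A) : Summable fun a => (p a).toReal :=
  ENNReal.summable_toReal p.tsum_coe_ne_top

lemma tsum_pmf_toReal {A : Type*} (p : PMF A) : ∑' a, (p a).toReal = 1 := by
  rw [← ENNReal.tsum_toReal_eq p.apply_ne_top, p.tsum_coe, ENNReal.toReal_one]

lemma summable_pmf_mul {A : Type*} (p : PMF A) {f : A → ℝ} {M : ℝ} (hf : ∀ a, |f a| ≤ M) :
    Summable fun a => (p a).toReal * f a := by
  refine Summable.of_norm_bounded ((summable_pmf_toReal p).mul_right M) fun a => ?_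
  rw [Real.norm_eq_abs, abs_mul, abs_of_nonneg ENNReal.toReal_nonneg]
  exact mul_le_mul_of_nonneg_left (hf a) ENNReal.toReal_nonneg

lemma abs_tsum_pmf_le {A : Type*} (p : PMF A) {f : A → ℝ} {M : ℝ} (hf : ∀ a, |f a| ≤ M) :
    |∑' a, (p a).toReal * f a| ≤ M := by
  have hM : HasSum (fun a => (p a).toReal * M) M := by
    simpa [tsum_pmf_toReal] using (summable_pmf_toReal p).hasSum.mul_right M
  rw [← Real.norm_eq_abs]
  refine tsum_of_norm_bounded hM fun a => ?_
  rw [Real.norm_eq_abs, abs_mul, abs_of_nonneg ENNReal.toReal_nonneg]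
  exact mul_le_mul_of_nonneg_left (hf a) ENNReal.toReal_nonneg

lemma abs_tsum_pmf_sub_le {A : Type*} (p q : PMF A) {f : A → ℝ} {M : ℝ}
    (hf : ∀ a, |f a| ≤ M) :
    |∑' a, (p a).toReal * f a - ∑' a, (q a).toReal * f a| ≤ 2 * tvDist p q * M := by
  rw [← (summable_pmf_mul p hf).tsum_sub (summable_pmf_mul q hf), ← Real.norm_eq_abs]
  have hs := ((summable_pmf_toReal p).sub (summable_pmf_toReal q)).abs.hasSum.mul_right M
  have he : 2 * tvDist p q * M = (∑' a, |(p a).toReal - (q a).toReal|) * M := by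
    unfold tvDist; ring
  rw [he]
  refine tsum_of_norm_bounded hs fun a => ?_
  rw [← sub_mul, Real.norm_eq_abs, abs_mul]
  exact mul_le_mul_of_nonneg_left (hf a) (abs_nonneg _)

/-- Performance degradation bound: if the source policy `π_S` is `L_TV`-Lipschitz in
total variation, `Ψ` approximates the exact mapping `h` within `ε`, `V₁, V₂` are the
bounded fixed points of the Bellman operators for the induced policies `π_Ψ` and
`π_{S∘h}`, and the action-values of `V₂` are bounded by `Q_max`, then
`‖V₁ − V₂‖_∞ ≤ (2 · L_TV · Q_max / (1 − γ)) · ε`. -/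
theorem performance_degradation_bound {ST A : Type*} [Countable ST] [Countable A]
    {SS : Type*} [MetricSpace SS]
    (TT : ST → A → PMF ST) (RT : ST → A → ℝ)
    (γ : ℝ) (hγ0 : 0 < γ) (hγ1 : γ < 1)
    (hRT : ∃ M : ℝ, ∀ s a, |RT s a| ≤ M)
    (πS : SS → PMF A) (LTV : ℝ) (hLTV : 0 < LTV)
    (hLip : ∀ s₁ s₂ : SS, tvDist (πS s₁) (πS s₂) ≤ LTV * dist s₁ s₂)
    (h Ψ : ST → SS) (ε : ℝ) (hε : 0 ≤ ε)
    (hΨ : ∀ s : ST, dist (Ψ s) (h s) ≤ ε)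
    (V₁ V₂ : ST → ℝ) (hV₁b : IsBoundedFun V₁) (hV₂b : IsBoundedFun V₂)
    (hfix₁ : bellman TT RT γ (fun s => πS (Ψ s)) V₁ = V₁)
    (hfix₂ : bellman TT RT γ (fun s => πS (h s)) V₂ = V₂)
    (Qmax : ℝ) (hQmax : 0 ≤ Qmax)
    (hQ : ∀ (s : ST) (a : A),
      |RT s a + γ * ∑' s' : ST, (TT s a s').toReal * V₂ s'| ≤ Qmax) :
    supNorm (fun s => V₁ s - V₂ s) ≤ (2 * LTV * Qmax / (1 - γ)) * ε := by
  obtain ⟨M, hM⟩ := hRT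
  obtain ⟨M₁, hM₁⟩ := hV₁b
  obtain ⟨M₂, hM₂⟩ := hV₂b
  have h1γ : 0 < 1 - γ := by linarith
  -- An empty state space is treated apart: there the supremum is the junk value `0`.
  rcases isEmpty_or_nonempty ST with hST | hST
  · rw [supNorm, Real.iSup_of_isEmpty]
    positivity
  set D := supNorm (fun s => V₁ s - V₂ s) with hD
  have hbdd : BddAbove (Set.range fun s => |V₁ s - V₂ s|) := by
    refine ⟨M₁ + M₂, ?_⟩
    rintro _ ⟨s, rfl⟩
    exact (abs_sub _ _).trans (add_le_add (hM₁ s) (hM₂ s))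
  have hle : ∀ s, |V₁ s - V₂ s| ≤ D := fun s => le_ciSup hbdd s
  have hQdiff : ∀ s a, |(RT s a + γ * ∑' s', (TT s a s').toReal * V₁ s')
      - (RT s a + γ * ∑' s', (TT s a s').toReal * V₂ s')| ≤ γ * D := by
    intro s a
    rw [add_sub_add_left_eq_sub, ← mul_sub,
      ← (summable_pmf_mul (TT s a) hM₁).tsum_sub (summable_pmf_mul (TT s a) hM₂),
      abs_mul, abs_of_pos hγ0]
    simp_rw [← mul_sub]
    exact mul_le_mul_of_nonneg_left (abs_tsum_pmf_le (TT s a) hle) hγ0.le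
  have hQ₁ : ∀ s a, |RT s a + γ * ∑' s', (TT s a s').toReal * V₁ s'| ≤ M + γ * M₁ := by
    intro s a
    refine (abs_add_le _ _).trans (add_le_add (hM s a) ?_)
    rw [abs_mul, abs_of_pos hγ0]
    exact mul_le_mul_of_nonneg_left (abs_tsum_pmf_le (TT s a) hM₁) hγ0.le
  have hstep : ∀ s, |V₁ s - V₂ s| ≤ γ * D + 2 * (LTV * ε) * Qmax := by
    intro s
    have e₁ := congrFun hfix₁ s
    have e₂ := congrFun hfix₂ s
    have hA := abs_tsum_pmf_le (πS (Ψ s)) (hQdiff s)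
    simp_rw [mul_sub] at hA
    rw [(summable_pmf_mul (πS (Ψ s)) (hQ₁ s)).tsum_sub
      (summable_pmf_mul (πS (Ψ s)) (hQ s))] at hA
    have hB := abs_tsum_pmf_sub_le (πS (Ψ s)) (πS (h s)) (hQ s)
    have hTV : tvDist (πS (Ψ s)) (πS (h s)) ≤ LTV * ε :=
      (hLip _ _).trans (mul_le_mul_of_nonneg_left (hΨ s) hLTV.le)
    have hC : 2 * tvDist (πS (Ψ s)) (πS (h s)) * Qmax ≤ 2 * (LTV * ε) * Qmax := by gcongr
    unfold bellman at e₁ e₂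
    rw [← e₁, ← e₂]
    exact (abs_sub_le _ _ _).trans (add_le_add hA (hB.trans hC))
  have hfin : D ≤ γ * D + 2 * (LTV * ε) * Qmax := ciSup_le hstep
  rw [div_mul_eq_mul_div, le_div_iff₀ h1γ]
  linarith
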